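/- arXiv:2404.12181 — 6 statements merged into one kernel-verified Lean document; each statement's English description precedes it below -/
import Mathlib

section
/- Let l ∈ ℕ and for j ∈ ℕ let m_j denote the j-th moment of a standard real Gaussian, m_j = ∫_ℝ z^j dγ(z) where γ = N(0,1). Define the (l+1)×(l+1) real matrix A = (a_{k,i})_{0 ≤ k,i ≤ l} by a_{k,i} = ∑_{j=0}^{k} C(k,j) (−1)^j m_j i^{k−j}. Then det(A) = ∏_{0 ≤ k < i ≤ l} (i − k); in particular det(A) > 0 and A is invertible. -/
open MeasureTheory ProbabilityTheory

/-!
The `k`-th row of `A` lists the values at `0, …, l` of the polynomial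
`∑ j ≤ k, C(k,j) (-1)^j m_j X^(k-j)`, which is monic of degree `k` because `m_0 = 1`. Replacing
monic polynomials of degrees `0, …, l` by the monomials `1, …, X^l` is a unitriangular change of
basis, so `A` has the same determinant as the Vandermonde matrix of the nodes.
-/

section DescPolynomial

open Polynomial

/-- The polynomial `a 0 * X ^ k + a 1 * X ^ (k - 1) + ⋯ + a k`: the sequence `a` lists the
coefficients from the leading one downwards. -/
noncomputable def descPolynomial {R : Type*} [Semiring R] (a : ℕ → R) (k : ℕ) : R[X] :=
  ∑ j ∈ Finset.range (k + 1), C (a j) * X ^ (k - j)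

variable {R : Type*} [Semiring R]

lemma natDegree_descPolynomial_le (a : ℕ → R) (k : ℕ) : (descPolynomial a k).natDegree ≤ k :=
  natDegree_sum_le_of_forall_le _ _ fun _ _ =>
    (natDegree_C_mul_X_pow_le _ _).trans (Nat.sub_le _ _)

lemma coeff_descPolynomial_self (a : ℕ → R) (k : ℕ) : (descPolynomial a k).coeff k = a 0 := by
  simp only [descPolynomial, finsetSum_coeff, coeff_C_mul_X_pow]
  rw [Finset.sum_eq_single_of_mem 0 (by simp)]
  · simp
  · intro j hj hj0
    have hjk := Finset.mem_range.1 hj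
    exact if_neg (by omega)

lemma monic_descPolynomial {a : ℕ → R} (ha : a 0 = 1) (k : ℕ) : (descPolynomial a k).Monic :=
  monic_of_natDegree_le_of_coeff_eq_one k (natDegree_descPolynomial_le a k)
    ((coeff_descPolynomial_self a k).trans ha)

lemma natDegree_descPolynomial {a : ℕ → R} (ha : a 0 ≠ 0) (k : ℕ) :
    (descPolynomial a k).natDegree = k :=
  natDegree_eq_of_le_of_coeff_ne_zero (natDegree_descPolynomial_le a k)
    ((coeff_descPolynomial_self a k).trans_ne ha)

lemma eval_descPolynomial (a : ℕ → R) (k : ℕ) (x : R) :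
    (descPolynomial a k).eval x = ∑ j ∈ Finset.range (k + 1), a j * x ^ (k - j) := by
  simp [descPolynomial, eval_finsetSum]

end DescPolynomial

section Determinant

variable {R : Type*} [CommRing R] {n : ℕ}

lemma det_sum_mul_pow_sub_eq_det_vandermonde (c : Fin n → ℕ → R) (hc : ∀ k, c k 0 = 1)
    (v : Fin n → R) :
    (Matrix.of fun k i : Fin n =>
      ∑ j ∈ Finset.range (k.val + 1), c k j * v i ^ (k.val - j)).det =
      (Matrix.vandermonde v).det := by
  nontriviality R
  rw [← Matrix.det_transpose, Matrix.det_eval_matrixOfPolynomials_eq_det_vandermonde v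
    (fun k => descPolynomial (c k) k)
    (fun k => natDegree_descPolynomial (by simp [hc]) k) (fun k => monic_descPolynomial (hc k) k)]
  congr 1
  ext i k
  exact (eval_descPolynomial (c k) k (v i)).symm

lemma det_vandermonde_eq_prod_range (v : ℕ → R) :
    (Matrix.vandermonde fun i : Fin n => v i).det =
      ∏ i : Fin n, ∏ k ∈ Finset.range i.val, (v i - v k) := by
  rw [Matrix.det_vandermonde,
    Finset.prod_comm' (t' := Finset.univ) (s' := fun i => Finset.Iio i) (by simp)]
  refine Finset.prod_congr rfl fun i _ => ?_
  rw [← Nat.Iio_eq_range, ← Fin.map_valEmbedding_Iio, Finset.prod_map]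
  simp only [Fin.valEmbedding_apply]

end Determinant

theorem stmt_0_general {K : Type*} [Field K] [LinearOrder K] [IsStrictOrderedRing K] {n : ℕ}
    (c : Fin n → ℕ → K) (hc : ∀ k, c k 0 = 1) {v : ℕ → K} (hv : StrictMono v) :
    let A : Matrix (Fin n) (Fin n) K := Matrix.of fun k i =>
      ∑ j ∈ Finset.range (k.val + 1), c k j * v i ^ (k.val - j)
    A.det = (∏ i : Fin n, ∏ k ∈ Finset.range i.val, (v i - v k)) ∧ 0 < A.det ∧ IsUnit A.det := by
  intro A
  have hdet : A.det = ∏ i : Fin n, ∏ k ∈ Finset.range i.val, (v i - v k) :=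
    (det_sum_mul_pow_sub_eq_det_vandermonde c hc fun i => v i).trans
      (det_vandermonde_eq_prod_range v)
  have hpos : 0 < A.det := hdet ▸ Finset.prod_pos fun i _ => Finset.prod_pos fun k hk =>
    sub_pos.2 (hv (Finset.mem_range.1 hk))
  exact ⟨hdet, hpos, hpos.ne'.isUnit⟩

/-- the matrix `A` built from the Gaussian moments has determinant
`∏_{0 ≤ k < i ≤ l} (i - k)`; in particular it is positive and `A` is invertible. -/
theorem stmt_0 (l : ℕ) :
    let m : ℕ → ℝ := fun j => ∫ z : ℝ, z ^ j ∂(gaussianReal 0 1)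
    let A : Matrix (Fin (l + 1)) (Fin (l + 1)) ℝ := fun k i =>
      ∑ j ∈ Finset.range (k.val + 1),
        (Nat.choose k.val j : ℝ) * (-1) ^ j * m j * (i.val : ℝ) ^ (k.val - j)
    A.det = (∏ i : Fin (l + 1), ∏ k ∈ Finset.range i.val, ((i.val : ℝ) - (k : ℝ)))
      ∧ 0 < A.det ∧ IsUnit A.det := by
  intro m
  exact stmt_0_general (fun k j => (Nat.choose k.val j : ℝ) * (-1) ^ j * m j) (by simp [m])
    Nat.strictMono_cast
end

section
/- Let l ∈ ℕ and for j ∈ ℕ let m_j denote the j-th moment of a standard real Gaussian, m_j = ∫_ℝ z^j dγ(z) where γ = N(0,1). Then there exists a unique vector u = (u_0, …, u_l) ∈ ℝ^{l+1} such that for every k ∈ {0,…,l}: ∑_{i=0}^{l} u_i ( ∑_{j=0}^{k} (−1)^j m_j i^{k−j} / (j! (k−j)!) ) equals 1 if k = 0 and equals 0 if 1 ≤ k ≤ l. -/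
open MeasureTheory ProbabilityTheory

/-!
Up to the factor `1 / k!`, the coefficient of `u i` in the `k`-th equation is the value at the
node `i` of a polynomial of degree exactly `k`, with leading coefficient `m 0 = 1`. The matrix of
the system is therefore a Vandermonde matrix with distinct nodes times an upper triangular matrix
with nonzero diagonal, which is invertible.
-/

open Polynomial Matrix
open scoped Nat

section EvaluationMatrix

theorem det_eval_eq_det_vandermonde_mul_prod_coeff {R : Type*} [CommRing R] {n : ℕ}
    (v : Fin n → R) (p : Fin n → R[X]) (hp : ∀ k, (p k).natDegree ≤ k) :
    (of fun i k => (p k).eval (v i)).det = (vandermonde v).det * ∏ k, (p k).coeff k := by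
  rw [eval_matrixOfPolynomials_eq_vandermonde_mul_matrixOfPolynomials v p hp, det_mul,
    det_of_isUpperTriangular (matrixOfPolynomials_blockTriangular p hp)]
  simp only [of_apply]

variable {K : Type*} [Field K] {n : ℕ} {v : Fin n → K} {p : Fin n → K[X]}

theorem isUnit_eval_of_degree_eq (hv : Function.Injective v) (hp : ∀ k, (p k).degree = (k : ℕ)) :
    IsUnit (of fun i k => (p k).eval (v i)) := by
  rw [isUnit_iff_isUnit_det, isUnit_iff_ne_zero, det_eval_eq_det_vandermonde_mul_prod_coeff v p
    fun k => natDegree_le_of_degree_le (hp k).le]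
  exact mul_ne_zero (det_vandermonde_ne_zero_iff.mpr hv)
    (Finset.prod_ne_zero_iff.mpr fun k _ => coeff_ne_zero_of_eq_degree (hp k))

theorem existsUnique_sum_mul_eval_eq (hv : Function.Injective v)
    (hp : ∀ k, (p k).degree = (k : ℕ)) (b : Fin n → K) :
    ∃! u : Fin n → K, ∀ k, ∑ i, u i * (p k).eval (v i) = b k := by
  have hA := isUnit_eval_of_degree_eq hv hp
  have hbij : Function.Bijective fun u : Fin n → K => u ᵥ* of fun i k => (p k).eval (v i) :=
    ⟨vecMul_injective_iff_isUnit.mpr hA, vecMul_surjective_iff_isUnit.mpr hA⟩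
  simpa only [funext_iff] using! hbij.existsUnique b

end EvaluationMatrix

/-- The `k`-th Appell polynomial `∑ j ≤ k, (k choose j) * a j * X ^ (k - j)` of a sequence `a`.
When `a j = (-1) ^ j * 𝔼[Z ^ j]`, its value at `x` is `𝔼[(x - Z) ^ k]`. -/
noncomputable def appell {R : Type*} [Semiring R] (a : ℕ → R) (k : ℕ) : R[X] :=
  ∑ j ∈ Finset.range (k + 1), C (k.choose j * a j) * X ^ (k - j)

section Appell

variable {R : Type*} [Semiring R] (a : ℕ → R) (k : ℕ)

theorem natDegree_appell_le : (appell a k).natDegree ≤ k :=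
  natDegree_sum_le_of_forall_le _ _ fun _ _ =>
    (natDegree_C_mul_X_pow_le _ _).trans (Nat.sub_le k _)

theorem coeff_appell_self : (appell a k).coeff k = a 0 := by
  rw [appell, finsetSum_coeff, Finset.sum_eq_single_of_mem 0 (by simp)]
  · simp
  · intro j hj hj0
    have hjk : j < k + 1 := Finset.mem_range.mp hj
    rw [coeff_C_mul_X_pow, if_neg (by lia)]

variable {a} in
theorem degree_appell (ha : a 0 ≠ 0) : (appell a k).degree = k :=
  degree_eq_of_le_of_coeff_ne_zero (degree_le_of_natDegree_le (natDegree_appell_le a k))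
    (by rwa [coeff_appell_self])

end Appell

section CharZero

variable {K : Type*} [Field K] [CharZero K]

theorem eval_appell_div_factorial (a : ℕ → K) (k : ℕ) (x : K) :
    (appell a k).eval x / k ! =
      ∑ j ∈ Finset.range (k + 1), a j * x ^ (k - j) / ((j ! : K) * ((k - j)! : K)) := by
  rw [appell, eval_finsetSum, Finset.sum_div]
  refine Finset.sum_congr rfl fun j hj => ?_
  have hk : (k ! : K) ≠ 0 := Nat.cast_ne_zero.mpr k.factorial_ne_zero
  rw [eval_C_mul, eval_pow, eval_X, Nat.cast_choose K (Finset.mem_range_succ_iff.mp hj)]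
  field_simp

theorem stmt_2_general {n : ℕ} {a : ℕ → K} (ha : a 0 ≠ 0) {v : Fin n → K}
    (hv : Function.Injective v) (b : Fin n → K) :
    ∃! u : Fin n → K, ∀ k : Fin n,
      ∑ i, u i * ∑ j ∈ Finset.range (k.val + 1),
        a j * v i ^ (k.val - j) / ((j ! : K) * ((k.val - j)! : K)) = b k := by
  have hk (k : Fin n) : (k ! : K) ≠ 0 := Nat.cast_ne_zero.mpr k.val.factorial_ne_zero
  simp only [← eval_appell_div_factorial, ← mul_div_assoc, ← Finset.sum_div, div_eq_iff (hk _)]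
  exact existsUnique_sum_mul_eval_eq hv (fun k => degree_appell k ha) fun k => b k * k !

end CharZero

/-- existence and uniqueness of the debiasing vector `u`. -/
theorem stmt_2 (l : ℕ) :
    let m : ℕ → ℝ := fun j => ∫ z : ℝ, z ^ j ∂(gaussianReal 0 1)
    ∃! u : Fin (l + 1) → ℝ, ∀ k : Fin (l + 1),
      (∑ i : Fin (l + 1), u i *
        ∑ j ∈ Finset.range (k.val + 1),
          (-1 : ℝ) ^ j * m j * (i.val : ℝ) ^ (k.val - j) /
            ((Nat.factorial j : ℝ) * (Nat.factorial (k.val - j) : ℝ))) =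
      if k.val = 0 then 1 else 0 := by
  intro m
  exact stmt_2_general (a := fun j => (-1) ^ j * m j) (by simp [m])
    (Nat.cast_injective.comp Fin.val_injective) _
end

section
/- Let d ≥ 1, and let V : ℝ^d → ℝ be differentiable with V(0) = 0 and V(x) ≥ V₀ for all x ∈ ℝ^d, where V₀ ∈ ℝ. Set b = −∇V and assume: (i) there exist b₀, b₁ > 0 with ‖b(x)‖ ≤ b₀ + b₁‖x‖ for all x ∈ ℝ^d; (ii) there exist C̃ > 0 and ρ̃ > 0 such that ⟨x, b(x)⟩ ≤ −C̃‖x‖ for all x with ‖x‖ ≥ ρ̃. Then there exists a constant M > 0, depending only on d, b₀, b₁, V₀, C̃ and ρ̃, such that ‖b(x)‖ · e^{−V(x)} ≤ M for all x ∈ ℝ^d. -/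
open MeasureTheory RealInnerProductSpace

/-!
Along the ray from the origin through `x`, dissipativity says that `V` grows at rate at least `C`
once the distance to the origin exceeds `ρ`. Hence `V x ≥ V₀ + C (‖x‖ - ρ)`, so that `exp (-V x)`
decays exponentially in `‖x‖` and absorbs the linear growth of the derivative.
-/

lemma hasDerivAt_comp_smul_const {𝕜 E F : Type*} [NontriviallyNormedField 𝕜]
    [NormedAddCommGroup E] [NormedSpace 𝕜 E] [NormedAddCommGroup F] [NormedSpace 𝕜 F]
    {f : E → F} {f' : E →L[𝕜] F} {x : E} {t : 𝕜} (hf : HasFDerivAt f f' (t • x)) :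
    HasDerivAt (fun s : 𝕜 ↦ f (s • x)) (f' x) t := by
  have hray : HasDerivAt (fun s : 𝕜 ↦ s • x) x t := by
    simpa only [one_smul, id] using (hasDerivAt_id t).smul_const x
  exact hf.comp_hasDerivAt t hray

section RadialGrowth

variable {E : Type*} [NormedAddCommGroup E] [NormedSpace ℝ E] {V : E → ℝ} {C ρ : ℝ}

lemma mul_norm_smul_le_map_smul_iff (f : E →ₗ[ℝ] ℝ) {x : E} {t : ℝ} (ht : 0 < t) :
    C * ‖t • x‖ ≤ f (t • x) ↔ C * ‖x‖ ≤ f x := by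
  rw [norm_smul_of_nonneg ht.le, map_smul, smul_eq_mul, mul_left_comm, mul_le_mul_iff_right₀ ht]

lemma mul_norm_sub_norm_smul_le_sub (hV : Differentiable ℝ V)
    (hradial : ∀ y, ρ ≤ ‖y‖ → C * ‖y‖ ≤ fderiv ℝ V y y)
    {x : E} {s : ℝ} (hs₀ : 0 ≤ s) (hs₁ : s ≤ 1) (hsx : ρ ≤ ‖s • x‖) :
    C * (‖x‖ - ‖s • x‖) ≤ V x - V (s • x) := by
  have hderiv : ∀ t : ℝ, HasDerivAt (fun t : ℝ ↦ V (t • x)) (fderiv ℝ V (t • x) x) t :=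
    fun t ↦ hasDerivAt_comp_smul_const (hV (t • x)).hasFDerivAt
  have hderiv_ge : ∀ t ∈ interior (Set.Icc s 1), C * ‖x‖ ≤ deriv (fun t : ℝ ↦ V (t • x)) t := by
    rw [interior_Icc]
    intro t ht
    have ht₀ : 0 < t := hs₀.trans_lt ht.1
    have hρ : ρ ≤ ‖t • x‖ := by
      refine hsx.trans ?_
      rw [norm_smul_of_nonneg hs₀, norm_smul_of_nonneg ht₀.le]
      gcongr
      exact ht.1.le
    rw [(hderiv t).deriv]
    exact (mul_norm_smul_le_map_smul_iff (fderiv ℝ V (t • x)).toLinearMap ht₀).1 (hradial _ hρ)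
  have hmean := (convex_Icc s 1).mul_sub_le_image_sub_of_le_deriv
    (fun t _ ↦ (hderiv t).continuousAt.continuousWithinAt)
    (fun t _ ↦ (hderiv t).differentiableAt.differentiableWithinAt)
    hderiv_ge s (Set.left_mem_Icc.2 hs₁) 1 (Set.right_mem_Icc.2 hs₁) hs₁
  calc C * (‖x‖ - ‖s • x‖) = C * ‖x‖ * (1 - s) := by rw [norm_smul_of_nonneg hs₀]; ring
    _ ≤ V x - V (s • x) := by simpa only [one_smul] using hmean

lemma add_mul_norm_sub_le_of_mul_norm_le_fderiv (hC : 0 ≤ C) (hρ : 0 ≤ ρ)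
    (hV : Differentiable ℝ V) {V₀ : ℝ} (hV₀ : ∀ y, ‖y‖ ≤ ρ → V₀ ≤ V y)
    (hradial : ∀ y, ρ ≤ ‖y‖ → C * ‖y‖ ≤ fderiv ℝ V y y) (x : E) :
    V₀ + C * (‖x‖ - ρ) ≤ V x := by
  rcases le_total ‖x‖ ρ with hx | hx
  · have hslope : C * (‖x‖ - ρ) ≤ 0 := mul_nonpos_of_nonneg_of_nonpos hC (sub_nonpos.2 hx)
    linarith [hV₀ x hx]
  · have hnorm : ‖(ρ / ‖x‖) • x‖ = ρ := by
      rw [norm_smul_of_nonneg (by positivity)]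
      exact div_mul_cancel_of_imp fun h ↦ le_antisymm (h ▸ hx) hρ
    have hgrowth := mul_norm_sub_norm_smul_le_sub hV hradial (by positivity)
      (div_le_one_of_le₀ hx (norm_nonneg x)) hnorm.ge
    rw [hnorm] at hgrowth
    linarith [hV₀ _ hnorm.le]

end RadialGrowth

lemma add_mul_le_mul_exp {a b C r : ℝ} (ha : 0 ≤ a) (hb : 0 ≤ b) (hC : 0 < C) (hr : 0 ≤ r) :
    a + b * r ≤ (a + b / C) * Real.exp (C * r) := by
  have hone : 1 ≤ Real.exp (C * r) := Real.one_le_exp (by positivity)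
  have hlin : C * r ≤ Real.exp (C * r) := by linarith [Real.add_one_le_exp (C * r)]
  calc a + b * r = a * 1 + b / C * (C * r) := by field_simp
    _ ≤ a * Real.exp (C * r) + b / C * Real.exp (C * r) := by gcongr
    _ = (a + b / C) * Real.exp (C * r) := by ring

lemma norm_gradient {𝕜 E : Type*} [RCLike 𝕜] [NormedAddCommGroup E] [InnerProductSpace 𝕜 E]
    [CompleteSpace E] (f : E → 𝕜) (x : E) : ‖gradient f x‖ = ‖fderiv 𝕜 f x‖ :=
  (InnerProductSpace.toDual 𝕜 E).symm.norm_map _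

theorem stmt_3_general {E : Type*} [NormedAddCommGroup E] [NormedSpace ℝ E] {V : E → ℝ}
    {b₀ b₁ V₀ C ρ : ℝ} (hb₁ : 0 ≤ b₁) (hC : 0 < C) (hρ : 0 ≤ ρ)
    (hV : Differentiable ℝ V) (hV₀ : ∀ x, ‖x‖ ≤ ρ → V₀ ≤ V x)
    (hgrowth : ∀ x, ‖fderiv ℝ V x‖ ≤ b₀ + b₁ * ‖x‖)
    (hradial : ∀ x, ρ ≤ ‖x‖ → C * ‖x‖ ≤ fderiv ℝ V x x) (x : E) :
    ‖fderiv ℝ V x‖ * Real.exp (-V x) ≤ (b₀ + b₁ / C) * Real.exp (C * ρ - V₀) := by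
  have hb₀ : 0 ≤ b₀ := (norm_nonneg _).trans (by simpa using hgrowth 0)
  have hlower := add_mul_norm_sub_le_of_mul_norm_le_fderiv hC.le hρ hV hV₀ hradial x
  calc ‖fderiv ℝ V x‖ * Real.exp (-V x)
      ≤ ((b₀ + b₁ / C) * Real.exp (C * ‖x‖)) * Real.exp (C * ρ - V₀ - C * ‖x‖) := by
        gcongr
        · exact (hgrowth x).trans (add_mul_le_mul_exp hb₀ hb₁ hC (norm_nonneg x))
        · linarith
    _ = (b₀ + b₁ / C) * Real.exp (C * ρ - V₀) := by
        rw [mul_assoc, ← Real.exp_add, add_sub_cancel]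

/-- under the growth, lower-boundedness and dissipativity assumptions on
`V` and `b = -∇V`, the quantity `‖b(x)‖ e^{-V(x)}` is bounded by a constant `M`
depending only on `d, b₀, b₁, V₀, C̃, ρ̃`. -/
theorem stmt_3 (d : ℕ) (hd : 1 ≤ d) (b₀ b₁ V₀ Cb ρb : ℝ)
    (hb₀ : 0 < b₀) (hb₁ : 0 < b₁) (hCb : 0 < Cb) (hρb : 0 < ρb) :
    ∃ M > 0, ∀ V : EuclideanSpace ℝ (Fin d) → ℝ,
      Differentiable ℝ V → V 0 = 0 → (∀ x, V₀ ≤ V x) →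
      (∀ x, ‖-gradient V x‖ ≤ b₀ + b₁ * ‖x‖) →
      (∀ x, ρb ≤ ‖x‖ → ⟪x, -gradient V x⟫ ≤ -Cb * ‖x‖) →
      ∀ x, ‖-gradient V x‖ * Real.exp (-V x) ≤ M := by
  simp only [norm_neg, norm_gradient, inner_neg_right, inner_gradient_right, conj_trivial,
    neg_mul, neg_le_neg_iff]
  exact ⟨(b₀ + b₁ / Cb) * Real.exp (Cb * ρb - V₀), by positivity, fun V hV _ hV₀ hgrowth hradial ↦
    stmt_3_general hb₁.le hCb hρb.le hV (fun x _ ↦ hV₀ x) hgrowth hradial⟩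
end

section
/- Let r > 0 and let ν ≥ (2/r)^{1/r}. Then ∫_ν^∞ exp(−z^r) dz ≤ 2 r^{−1} ν^{1−r} exp(−ν^r). -/
open MeasureTheory

/-!
Write `g x = x ^ (q + 1 - r) * exp (-b * x ^ r)`, which tends to zero at infinity. Differentiating
the exponential in `g` produces `-(b * r)` times the integrand `x ^ q * exp (-b * x ^ r)`;
differentiating the power produces a term smaller by a factor of order `x ^ r`. Once `x ^ r` is
large enough for the latter to be absorbed at the cost of a constant `c`, the integrand is at most
`-c / (b * r) * g' x`, whose integral over `[ν, ∞)` is `c / (b * r) * g ν`.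
The bound for `exp (-x ^ r)` is the case `q = 0`, `b = 1`, `c = 2`.
-/

open Filter Set Topology

section

variable {a b c p r x ν : ℝ}

lemma hasDerivAt_rpow_mul_exp_neg_mul_rpow (hx : 0 < x) :
    HasDerivAt (fun y : ℝ ↦ y ^ p * Real.exp (-b * y ^ r))
      ((p * x ^ (p - 1) - b * r * x ^ (p + r - 1)) * Real.exp (-b * x ^ r)) x := by
  have h_pow := Real.hasDerivAt_rpow_const (p := p) (Or.inl hx.ne')
  have h_exp := ((Real.hasDerivAt_rpow_const (p := r) (Or.inl hx.ne')).const_mul (-b)).exp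
  refine (h_pow.mul h_exp).congr_deriv ?_
  rw [add_sub_assoc, Real.rpow_add hx]
  ring

lemma tendsto_rpow_mul_exp_neg_mul_rpow_atTop_nhds_zero (p : ℝ) (hr : 0 < r) (hb : 0 < b) :
    Tendsto (fun x : ℝ ↦ x ^ p * Real.exp (-b * x ^ r)) atTop (𝓝 0) := by
  refine ((tendsto_rpow_mul_exp_neg_mul_atTop_nhds_zero (p / r) b hb).comp
    (tendsto_rpow_atTop hr)).congr' ?_
  filter_upwards [eventually_ge_atTop 0] with x hx
  rw [Function.comp_apply, ← Real.rpow_mul hx, mul_div_cancel₀ _ hr.ne']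

lemma rpow_le_mul_sub_of_mul_le (hb : 0 < b) (hr : 0 < r) (hx : 0 < x)
    (h : c * p ≤ (c - 1) * (b * r * x ^ r)) :
    x ^ (p + r - 1) ≤ c / (b * r) * (b * r * x ^ (p + r - 1) - p * x ^ (p - 1)) := by
  have h_split : x ^ (p + r - 1) = x ^ (p - 1) * x ^ r := by
    rw [← Real.rpow_add hx, sub_add_eq_add_sub]
  rw [h_split, div_mul_eq_mul_div, le_div_iff₀ (mul_pos hb hr)]
  linear_combination x ^ (p - 1) * h

lemma le_mul_rpow_of_div_rpow_one_div_le (ha : 0 ≤ a) (hr : 0 < r)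
    (h : (a / r) ^ (1 / r) ≤ ν) : a ≤ r * ν ^ r := by
  have hν : 0 ≤ ν := le_trans (by positivity) h
  rw [one_div, Real.rpow_inv_le_iff_of_pos (by positivity) hν hr] at h
  exact (div_le_iff₀' hr).1 h

end

theorem stmt_7_general {b c q r ν : ℝ} (hb : 0 < b) (hc : 1 ≤ c) (hr : 0 < r) (hν : 0 < ν)
    (h : c * (q + 1 - r) ≤ (c - 1) * (b * r * ν ^ r)) :
    ∫ z in Ici ν, z ^ q * Real.exp (-b * z ^ r) ≤
      c / (b * r) * (ν ^ (q + 1 - r) * Real.exp (-b * ν ^ r)) := by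
  set p := q + 1 - r with hp
  have hq : q = p + r - 1 := by rw [hp]; ring
  let g' : ℝ → ℝ := fun z ↦
    (p * z ^ (p - 1) - b * r * z ^ (p + r - 1)) * Real.exp (-b * z ^ r)
  have h_deriv : ∀ z ∈ Ici ν, HasDerivAt (fun y ↦ y ^ p * Real.exp (-b * y ^ r)) (g' z) z :=
    fun z hz ↦ hasDerivAt_rpow_mul_exp_neg_mul_rpow (hν.trans_le hz)
  have h_lim := tendsto_rpow_mul_exp_neg_mul_rpow_atTop_nhds_zero p hr hb
  have h_le : ∀ z ∈ Ioi ν, z ^ q * Real.exp (-b * z ^ r) ≤ -(c / (b * r)) * g' z := by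
    intro z hz
    have hνz : ν ^ r ≤ z ^ r := Real.rpow_le_rpow hν.le (le_of_lt hz) hr.le
    have hz' : c * p ≤ (c - 1) * (b * r * z ^ r) := h.trans (by gcongr)
    rw [hq]
    linear_combination Real.exp (-b * z ^ r) *
      rpow_le_mul_sub_of_mul_le hb hr (hν.trans hz) hz'
  have h_nonneg : ∀ z ∈ Ioi ν, 0 ≤ z ^ q * Real.exp (-b * z ^ r) := fun z hz ↦ by
    have := hν.trans hz
    positivity
  have h_nonpos : ∀ z ∈ Ioi ν, g' z ≤ 0 := fun z hz ↦
    nonpos_of_mul_nonneg_right ((h_nonneg z hz).trans (h_le z hz)) (neg_lt_zero.2 (by positivity))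
  have h_int := integrableOn_Ioi_deriv_of_nonpos' h_deriv h_nonpos h_lim
  calc ∫ z in Ici ν, z ^ q * Real.exp (-b * z ^ r)
      = ∫ z in Ioi ν, z ^ q * Real.exp (-b * z ^ r) := integral_Ici_eq_integral_Ioi
    _ ≤ ∫ z in Ioi ν, -(c / (b * r)) * g' z :=
        integral_mono_of_nonneg (ae_restrict_of_forall_mem measurableSet_Ioi h_nonneg)
          (h_int.const_mul _) (ae_restrict_of_forall_mem measurableSet_Ioi h_le)
    _ = c / (b * r) * (ν ^ p * Real.exp (-b * ν ^ r)) := by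
        rw [integral_const_mul, integral_Ioi_of_hasDerivAt_of_nonpos' h_deriv h_nonpos h_lim]
        ring

/-- Gaussian-type tail bound
`∫_ν^∞ exp(-z^r) dz ≤ 2 r⁻¹ ν^{1-r} exp(-ν^r)` for `ν ≥ (2/r)^{1/r}`. -/
theorem stmt_7 (r ν : ℝ) (hr : 0 < r) (hν : (2 / r) ^ (1 / r) ≤ ν) :
    ∫ z in Set.Ici ν, Real.exp (-z ^ r) ≤ 2 * r⁻¹ * ν ^ (1 - r) * Real.exp (-ν ^ r) := by
  have h := le_mul_rpow_of_div_rpow_one_div_le zero_le_two hr hν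
  simpa [div_eq_mul_inv, mul_assoc] using stmt_7_general (b := 1) (c := 2) (q := 0) one_pos
    one_le_two hr (lt_of_lt_of_le (by positivity) hν) (by linarith)
end

section
/- Let a, b, c, z > 0 and p > 0 be real numbers. Then exp( −a z^p / (b + c z^{p/2}) ) ≤ exp( −a z^p / (2b) ) + exp( −a z^{p/2} / (2c) ). -/
theorem div_add_le_max_div_two_mul {K : Type*} [Field K] [LinearOrder K] [IsStrictOrderedRing K]
    {x b d : K} (hx : x ≤ 0) (hbd : 0 < b + d) :
    x / (b + d) ≤ max (x / (2 * b)) (x / (2 * d)) := by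
  have div_le_div_of_add_le {t : K} (ht : b + d ≤ t) : x / (b + d) ≤ x / t := by
    simpa only [div_eq_mul_inv] using mul_le_mul_of_nonpos_left (inv_anti₀ hbd ht) hx
  rcases le_total d b with d_le_b | b_le_d
  · exact le_max_of_le_left (div_le_div_of_add_le (by linarith))
  · exact le_max_of_le_right (div_le_div_of_add_le (by linarith))

theorem exp_max_le_exp_add_exp (u v : ℝ) : Real.exp (max u v) ≤ Real.exp u + Real.exp v := by
  rw [Real.exp_monotone.map_max]
  exact max_le_add_of_nonneg (Real.exp_nonneg u) (Real.exp_nonneg v)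

theorem exp_div_add_le_exp_add_exp {x b d : ℝ} (hx : x ≤ 0) (hbd : 0 < b + d) :
    Real.exp (x / (b + d)) ≤ Real.exp (x / (2 * b)) + Real.exp (x / (2 * d)) :=
  (Real.exp_le_exp.mpr (div_add_le_max_div_two_mul hx hbd)).trans (exp_max_le_exp_add_exp _ _)

/-- `exp(-a z^p / (b + c z^{p/2})) ≤ exp(-a z^p / (2b)) + exp(-a z^{p/2} / (2c))`. -/
theorem stmt_8 (a b c z p : ℝ) (ha : 0 < a) (hb : 0 < b) (hc : 0 < c) (hz : 0 < z)
    (hp : 0 < p) :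
    Real.exp (-(a * z ^ p) / (b + c * z ^ (p / 2))) ≤
      Real.exp (-(a * z ^ p) / (2 * b)) + Real.exp (-(a * z ^ (p / 2)) / (2 * c)) := by
  have hzp : z ^ p = z ^ (p / 2) * z ^ (p / 2) := by rw [← Real.rpow_add hz, add_halves]
  have cancel_rpow_half :
      -(a * z ^ p) / (2 * (c * z ^ (p / 2))) = -(a * z ^ (p / 2)) / (2 * c) := by
    rw [hzp]
    field_simp
  rw [← cancel_rpow_half]
  exact exp_div_add_le_exp_add_exp (neg_nonpos.mpr (by positivity)) (by positivity)
end

section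
/- Let d ≥ 1, α = (α₁,…,α_d) ∈ (0,∞)^d, L = (L₁,…,L_d) ∈ (0,∞)^d, and let g : ℝ^d → ℝ belong to the anisotropic Hölder class H_d(α, L). Let K : ℝ → ℝ be a bounded measurable kernel with compact support such that ∫_ℝ K(y) dy = 1 and ∫_ℝ y^k K(y) dy = 0 for all 1 ≤ k ≤ l − 1, where l ∈ ℕ satisfies l ≥ ⌈α_i⌉ for every i. Then there exists a constant C > 0, depending only on d, α, L and K, such that for every x ∈ ℝ^d and every h = (h₁,…,h_d) ∈ (0,∞)^d: | ∫_{ℝ^d} ( ∏_{i=1}^d K(z_i) ) ( g(x − h⊙z) − g(x) ) dz | ≤ C ∑_{i=1}^{d} h_i^{α_i}, where h⊙z = (h₁z₁,…,h_dz_d). -/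
open MeasureTheory

/-- The iterated partial derivative `∂_i^k g (x)` of `g : ℝ^d → ℝ` in the direction of
the `i`-th canonical basis vector, defined as the `k`-th derivative at `0` of
`t ↦ g (x + t e_i)`. -/
noncomputable def partialDerivIter (d : ℕ) (g : (Fin d → ℝ) → ℝ) (i : Fin d) (k : ℕ)
    (x : Fin d → ℝ) : ℝ :=
  iteratedDeriv k (fun t : ℝ => g (x + t • (Pi.single i 1 : Fin d → ℝ))) 0

/-- `g : ℝ^d → ℝ` belongs to the anisotropic Hölder class `H_d(α, L)`. -/
def IsAnisotropicHolder (d : ℕ) (α L : Fin d → ℝ) (g : (Fin d → ℝ) → ℝ) : Prop :=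
  ∀ i : Fin d,
    (∀ x : Fin d → ℝ, ∀ k < ⌊α i⌋₊,
        Differentiable ℝ (iteratedDeriv k
          (fun t : ℝ => g (x + t • (Pi.single i 1 : Fin d → ℝ))))) ∧
    (∀ k ≤ ⌊α i⌋₊, ∀ x : Fin d → ℝ, |partialDerivIter d g i k x| ≤ L i) ∧
    (∀ (t : ℝ) (x : Fin d → ℝ),
        |partialDerivIter d g i ⌊α i⌋₊ (x + t • (Pi.single i 1 : Fin d → ℝ)) -
            partialDerivIter d g i ⌊α i⌋₊ x| ≤ L i * |t| ^ (α i - (⌊α i⌋₊ : ℝ)))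

/-!
Move from `x` to `x - h ⊙ z` one coordinate at a time. In the increment along the `i`-th axis all
other coordinates are frozen, so by Fubini its integral is a one-dimensional kernel bias for a
function with `n = ⌈α i⌉ - 1` derivatives whose last one is Hölder of exponent `α i - n ∈ (0, 1]`.
The Taylor polynomial of degree `n` is killed by the vanishing moments of the kernel, and the
remainder is at most `L i * |h i * z i| ^ α i`.
-/

section Holder

variable {E : Type*} [NormedAddCommGroup E] [NormedSpace ℝ E] {n : ℕ} {β L : ℝ} {f : ℝ → E}

/-- `f` has `n` derivatives on the real line, the last of which is Hölder continuous with exponent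
`β` and constant `L`. The exponent is a real number, so that it can be computed as `α - n`. -/
structure HasHolderIteratedDeriv (n : ℕ) (β L : ℝ) (f : ℝ → E) : Prop where
  differentiable : ∀ k < n, Differentiable ℝ (iteratedDeriv k f)
  norm_sub_le : ∀ s t, ‖iteratedDeriv n f t - iteratedDeriv n f s‖ ≤ L * |t - s| ^ β

namespace HasHolderIteratedDeriv

lemma nonneg (hf : HasHolderIteratedDeriv n β L f) : 0 ≤ L := by
  simpa using (norm_nonneg _).trans (hf.norm_sub_le 0 1)

lemma deriv (hf : HasHolderIteratedDeriv (n + 1) β L f) :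
    HasHolderIteratedDeriv n β L (deriv f) where
  differentiable k hk := iteratedDeriv_succ' (f := f) ▸ hf.differentiable (k + 1) (by omega)
  norm_sub_le := iteratedDeriv_succ' (f := f) ▸ hf.norm_sub_le

lemma of_norm_iteratedDeriv_succ_le (hdiff : ∀ k ≤ n, Differentiable ℝ (iteratedDeriv k f))
    (hbound : ∀ t, ‖iteratedDeriv (n + 1) f t‖ ≤ L) : HasHolderIteratedDeriv n 1 L f where
  differentiable k hk := hdiff k hk.le
  norm_sub_le s t := by
    simpa using convex_univ.norm_image_sub_le_of_norm_deriv_le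
      (fun x _ => (hdiff n le_rfl).differentiableAt)
      (fun x _ => iteratedDeriv_succ (f := f) ▸ hbound x) (Set.mem_univ s) (Set.mem_univ t)

lemma norm_sub_taylorWithinEval_le (hβ : 0 ≤ β) (hf : HasHolderIteratedDeriv n β L f) (x₀ x : ℝ) :
    ‖f x - taylorWithinEval f n Set.univ x₀ x‖ ≤ L * |x - x₀| ^ (n + β) := by
  induction n generalizing f x with
  | zero => simpa using hf.norm_sub_le x₀ x
  | succ n ih =>
    have hL := hf.nonneg
    have hderiv (t : ℝ) : HasDerivAt (fun t => f t - taylorWithinEval f (n + 1) Set.univ x₀ t)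
        (_root_.deriv f t - taylorWithinEval (_root_.deriv f) n Set.univ x₀ t) t := by
      have hdiff : Differentiable ℝ f := by simpa using hf.differentiable 0 n.succ_pos
      simpa only [derivWithin_univ] using
        (hdiff t).hasDerivAt.fun_sub (hasDerivAt_taylorWithinEval_succ (s := Set.univ) f n)
    have hmvt := (convex_closedBall x₀ |x - x₀|).norm_image_sub_le_of_norm_hasDerivWithin_le
      (C := L * |x - x₀| ^ (n + β)) (fun t _ => (hderiv t).hasDerivWithinAt)
      (fun t ht => (ih hf.deriv t).trans (by
        have : |t - x₀| ≤ |x - x₀| := ht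
        gcongr))
      (Metric.mem_closedBall_self (abs_nonneg _)) (Metric.mem_closedBall.2 le_rfl)
    calc ‖f x - taylorWithinEval f (n + 1) Set.univ x₀ x‖
        ≤ L * |x - x₀| ^ (n + β) * |x - x₀| := by simpa using hmvt
      _ = L * |x - x₀| ^ ((n + 1 : ℕ) + β) := by
          rw [mul_assoc, ← Real.rpow_add_one' (abs_nonneg _) (by positivity)]
          push_cast
          ring_nf

end HasHolderIteratedDeriv

end Holder

/-- `K` is a smoothing kernel of order `a`, up to normalization: it is integrable with a finite
absolute moment of order `a`, and its moments of positive integer order below `a` vanish. -/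
structure IsKernelOfOrder (a : ℝ) (K : ℝ → ℝ) : Prop where
  integrable : Integrable K
  integrable_rpow_mul : Integrable fun y => |y| ^ a * K y
  moment_eq_zero : ∀ k : ℕ, 1 ≤ k → (k : ℝ) < a → ∫ y, y ^ k * K y = 0

lemma integrable_continuous_mul_of_hasCompactSupport {X : Type*} [TopologicalSpace X] [T2Space X]
    [MeasurableSpace X] [OpensMeasurableSpace X] {μ : Measure X} {f K : X → ℝ} (hf : Continuous f)
    (hK : Integrable K μ) (hK_supp : HasCompactSupport K) :
    Integrable (fun x => f x * K x) μ :=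
  (integrableOn_iff_integrable_of_support_subset
    ((Function.support_mul_subset_right f K).trans (subset_tsupport K))).1
    (hK.integrableOn.continuousOn_mul hf.continuousOn hK_supp)

namespace IsKernelOfOrder

variable {a : ℝ} {K : ℝ → ℝ}

lemma of_hasCompactSupport (ha : 0 ≤ a) (hK : Integrable K) (hK_supp : HasCompactSupport K)
    (hmom : ∀ k : ℕ, 1 ≤ k → (k : ℝ) < a → ∫ y, y ^ k * K y = 0) : IsKernelOfOrder a K where
  integrable := hK
  integrable_rpow_mul := integrable_continuous_mul_of_hasCompactSupport
    (continuous_abs.rpow_const fun _ => .inr ha) hK hK_supp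
  moment_eq_zero := hmom

lemma integrable_pow_mul (hK : IsKernelOfOrder a K) {k : ℕ} (hk : (k : ℝ) ≤ a) :
    Integrable fun y => y ^ k * K y := by
  have hpow_le (t : ℝ) (ht : 0 ≤ t) : t ^ k ≤ 1 + t ^ a := by
    rcases le_total t 1 with ht1 | ht1
    · linarith [pow_le_one₀ ht ht1 (n := k), Real.rpow_nonneg ht a]
    · linarith [Real.rpow_natCast t k ▸ Real.rpow_le_rpow_of_exponent_le ht1 hk]
  refine (hK.integrable.norm.add hK.integrable_rpow_mul.norm).mono'
    ((continuous_pow k).aestronglyMeasurable.mul hK.integrable.aestronglyMeasurable)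
    (.of_forall fun y => ?_)
  calc ‖y ^ k * K y‖ = |y| ^ k * |K y| := by rw [norm_mul, norm_pow]; rfl
    _ ≤ (1 + |y| ^ a) * |K y| := by gcongr; exact hpow_le _ (abs_nonneg y)
    _ = ‖K y‖ + ‖|y| ^ a * K y‖ := by
      rw [norm_mul, Real.norm_of_nonneg (Real.rpow_nonneg (abs_nonneg y) a)]
      simp only [Real.norm_eq_abs]
      ring

lemma integrable_mul_sum_pow (hK : IsKernelOfOrder a K) {n : ℕ} (hn : (n : ℝ) ≤ a) (c : ℕ → ℝ) :
    Integrable fun y => K y * ∑ k ∈ Finset.range n, c k * y ^ (k + 1) := by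
  simp only [Finset.mul_sum]
  refine integrable_finsetSum _ fun k hk => ?_
  have hkn : ((k + 1 : ℕ) : ℝ) ≤ n := by exact_mod_cast Finset.mem_range.1 hk
  exact ((hK.integrable_pow_mul (hkn.trans hn)).const_mul (c k)).congr (.of_forall fun y => by ring)

lemma integral_mul_sum_pow_eq_zero (hK : IsKernelOfOrder a K) {n : ℕ} (hn : (n : ℝ) < a)
    (c : ℕ → ℝ) : ∫ y, K y * ∑ k ∈ Finset.range n, c k * y ^ (k + 1) = 0 := by
  have hmonomial (y : ℝ) : K y * ∑ k ∈ Finset.range n, c k * y ^ (k + 1) =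
      ∑ k ∈ Finset.range n, c k * (y ^ (k + 1) * K y) := by
    rw [Finset.mul_sum]
    exact Finset.sum_congr rfl fun k _ => by ring
  have hlt {k : ℕ} (hk : k ∈ Finset.range n) : ((k + 1 : ℕ) : ℝ) < a :=
    lt_of_le_of_lt (by exact_mod_cast Finset.mem_range.1 hk) hn
  simp only [hmonomial]
  rw [integral_finsetSum _ fun k hk => (hK.integrable_pow_mul (hlt hk).le).const_mul _]
  refine Finset.sum_eq_zero fun k hk => ?_
  rw [integral_const_mul, hK.moment_eq_zero _ (by omega) (hlt hk), mul_zero]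

lemma abs_integral_mul_le (hK : IsKernelOfOrder a K) {n : ℕ} (hn : (n : ℝ) < a) {f : ℝ → ℝ}
    (hf : AEStronglyMeasurable f) {c : ℕ → ℝ} {M : ℝ}
    (hbound : ∀ y, |f y - ∑ k ∈ Finset.range n, c k * y ^ (k + 1)| ≤ M * |y| ^ a) :
    |∫ y, K y * f y| ≤ M * ∫ y, |y| ^ a * |K y| := by
  set p : ℝ → ℝ := fun y => ∑ k ∈ Finset.range n, c k * y ^ (k + 1)
  have hp : Continuous p := by fun_prop
  have hdom : Integrable fun y => M * (|y| ^ a * |K y|) :=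
    (hK.integrable_rpow_mul.abs.congr (.of_forall fun y => by
      simp only [abs_mul, abs_of_nonneg (Real.rpow_nonneg (abs_nonneg y) a)])).const_mul M
  have hle (y : ℝ) : ‖K y * (f y - p y)‖ ≤ M * (|y| ^ a * |K y|) :=
    calc ‖K y * (f y - p y)‖ = |f y - p y| * |K y| := by rw [norm_mul, mul_comm]; rfl
      _ ≤ M * |y| ^ a * |K y| := by gcongr; exact hbound y
      _ = M * (|y| ^ a * |K y|) := mul_assoc _ _ _
  have hrem : Integrable fun y => K y * (f y - p y) := hdom.mono'
    (hK.integrable.aestronglyMeasurable.mul (hf.sub hp.aestronglyMeasurable)) (.of_forall hle)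
  have hsplit : ∫ y, K y * f y = ∫ y, K y * (f y - p y) := by
    have := integral_add hrem (hK.integrable_mul_sum_pow hn.le c)
    rw [hK.integral_mul_sum_pow_eq_zero hn, add_zero] at this
    rw [← this]
    congr with y
    ring
  rw [hsplit, ← integral_const_mul]
  exact norm_integral_le_of_norm_le hdom (.of_forall hle)

lemma abs_integral_mul_sub_le {n : ℕ} {β L : ℝ} (hK : IsKernelOfOrder (n + β) K) (hβ : 0 < β)
    {φ : ℝ → ℝ} (hφ : HasHolderIteratedDeriv n β L φ) (hφ_meas : Measurable φ) (h : ℝ) :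
    |∫ y, K y * (φ (h * y) - φ 0)| ≤ L * |h| ^ (n + β) * ∫ y, |y| ^ (n + β) * |K y| := by
  refine hK.abs_integral_mul_le (n := n) (by linarith)
    (c := fun k => ((k + 1).factorial : ℝ)⁻¹ * iteratedDeriv (k + 1) φ 0 * h ^ (k + 1))
    ((hφ_meas.comp (measurable_const_mul h)).sub_const _).aestronglyMeasurable fun y => ?_
  have htaylor : taylorWithinEval φ n Set.univ 0 (h * y) = φ 0 + ∑ k ∈ Finset.range n,
      ((k + 1).factorial : ℝ)⁻¹ * iteratedDeriv (k + 1) φ 0 * h ^ (k + 1) * y ^ (k + 1) := by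
    rw [taylor_within_apply, Finset.sum_range_succ', add_comm]
    congr 1
    · simp
    · refine Finset.sum_congr rfl fun k _ => ?_
      rw [iteratedDerivWithin_univ, smul_eq_mul, sub_zero, mul_pow]
      ring
  have hrem := hφ.norm_sub_taylorWithinEval_le hβ.le 0 (h * y)
  rwa [htaylor, ← sub_sub, sub_zero, abs_mul, Real.mul_rpow (abs_nonneg h) (abs_nonneg y),
    ← mul_assoc] at hrem

end IsKernelOfOrder

section Coordinates

variable {ι : Type*} [DecidableEq ι]

lemma norm_sub_le_sum_of_update [Fintype ι] {X : ι → Type*} {E : Type*} [SeminormedAddCommGroup E]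
    {g : (∀ i, X i) → E} {ω : ∀ i, X i → X i → ℝ}
    (hg : ∀ i w a, ‖g (Function.update w i a) - g w‖ ≤ ω i (w i) a) (x y : ∀ i, X i) :
    ‖g y - g x‖ ≤ ∑ i, ω i (x i) (y i) := by
  suffices ∀ s : Finset ι, ‖g (s.piecewise y x) - g x‖ ≤ ∑ i ∈ s, ω i (x i) (y i) by
    simpa using this Finset.univ
  intro s
  induction s using Finset.induction_on with
  | empty => simp
  | insert i s hi ih =>
    rw [Finset.piecewise_insert, Finset.sum_insert hi]
    refine (norm_sub_le_norm_sub_add_norm_sub _ (g (s.piecewise y x)) _).trans (add_le_add ?_ ih)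
    simpa [hi] using hg i (s.piecewise y x) (y i)

lemma continuous_of_norm_update_sub_le [Finite ι] {E : Type*} [SeminormedAddCommGroup E]
    {g : (ι → ℝ) → E} {L β : ι → ℝ} (hβ : ∀ i, 0 < β i)
    (hg : ∀ i w a, ‖g (Function.update w i a) - g w‖ ≤ L i * |a - w i| ^ β i) : Continuous g := by
  cases nonempty_fintype ι
  refine continuous_iff_continuousAt.2 fun x => tendsto_iff_norm_sub_tendsto_zero.2 ?_
  have hmod : Continuous fun y : ι → ℝ => ∑ i, L i * |y i - x i| ^ β i :=
    continuous_finsetSum _ fun i _ =>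
      continuous_const.mul (Continuous.rpow_const (by fun_prop) fun _ => .inr (hβ i).le)
  refine squeeze_zero (fun _ => norm_nonneg _) (fun y => norm_sub_le_sum_of_update
    (ω := fun i s t => L i * |t - s| ^ β i) hg x y) ?_
  simpa [Real.zero_rpow (hβ _).ne'] using hmod.tendsto x

lemma continuous_finsetPiecewise {X : Type*} [TopologicalSpace X] {π : ι → Type*}
    [∀ i, TopologicalSpace (π i)] {u v : X → ∀ i, π i} (hu : Continuous u) (hv : Continuous v)
    (s : Finset ι) : Continuous fun x => s.piecewise (u x) (v x) :=
  continuous_pi fun i => by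
    by_cases hi : i ∈ s
    · simpa [hi] using continuous_pi_iff.1 hu i
    · simpa [hi] using continuous_pi_iff.1 hv i

/-- The restriction `t ↦ g (w + t e_i)` of `g` to the line through `w` parallel to the `i`-th
axis. -/
def axisSlice {E : Type*} (g : (ι → ℝ) → E) (w : ι → ℝ) (i : ι) (t : ℝ) : E :=
  g (w + t • Pi.single i 1)

lemma axisSlice_apply {E : Type*} (g : (ι → ℝ) → E) (w : ι → ℝ) (i : ι) (t : ℝ) :
    axisSlice g w i t = g (Function.update w i (w i + t)) :=
  congrArg g <| funext fun j => by rcases eq_or_ne j i with rfl | hj <;> simp [*]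

end Coordinates

lemma partialDerivIter_add_smul_single {d : ℕ} (g : (Fin d → ℝ) → ℝ) (i : Fin d) (k : ℕ)
    (w : Fin d → ℝ) (t : ℝ) :
    partialDerivIter d g i k (w + t • Pi.single i 1) = iteratedDeriv k (axisSlice g w i) t := by
  have hshift := congrFun (iteratedDeriv_comp_const_add k (axisSlice g w i) t) 0
  simpa only [partialDerivIter, axisSlice, add_smul, add_assoc, add_zero] using hshift

namespace IsAnisotropicHolder

variable {d : ℕ} {α L : Fin d → ℝ} {g : (Fin d → ℝ) → ℝ}

lemma abs_le (hg : IsAnisotropicHolder d α L g) (i : Fin d) (w : Fin d → ℝ) : |g w| ≤ L i := by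
  simpa [partialDerivIter] using (hg i).2.1 0 (Nat.zero_le _) w

lemma hasHolderIteratedDeriv_axisSlice (hg : IsAnisotropicHolder d α L g) {i : Fin d} {n : ℕ}
    (hn : n < α i) (w : Fin d → ℝ) :
    HasHolderIteratedDeriv n (min 1 (α i - n)) (L i) (axisSlice g w i) := by
  obtain ⟨hdiff, hbound, hholder⟩ := hg i
  rcases (Nat.le_floor hn.le).eq_or_lt with rfl | hlt
  · rw [min_eq_right (by linarith [Nat.lt_floor_add_one (α i)])]
    refine ⟨hdiff w, fun s t => ?_⟩
    have := hholder (t - s) (w + s • Pi.single i 1)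
    rwa [add_assoc, ← add_smul, add_sub_cancel, partialDerivIter_add_smul_single,
      partialDerivIter_add_smul_single] at this
  · have hα : ((n + 1 : ℕ) : ℝ) ≤ α i := (Nat.le_floor_iff' n.succ_ne_zero).1 hlt
    rw [min_eq_left (by push_cast at hα; linarith)]
    refine .of_norm_iteratedDeriv_succ_le (fun k hk => hdiff w k (by omega)) fun t => ?_
    rw [← partialDerivIter_add_smul_single]
    exact hbound (n + 1) hlt _

lemma continuous (hα : ∀ i, 0 < α i) (hg : IsAnisotropicHolder d α L g) : Continuous g := by
  refine continuous_of_norm_update_sub_le (L := L) (β := fun i => min 1 (α i))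
    (fun i => lt_min one_pos (hα i)) fun i w a => ?_
  have hslice := hg.hasHolderIteratedDeriv_axisSlice (n := 0) (by simpa using hα i) w
  simpa [axisSlice_apply] using hslice.norm_sub_le 0 (a - w i)

lemma integrable_prod_mul_sub (hα : ∀ i, 0 < α i) (hg : IsAnisotropicHolder d α L g) (i : Fin d)
    {K : Fin d → ℝ → ℝ} (hK : ∀ j, Integrable (K j)) {u v : (Fin d → ℝ) → Fin d → ℝ}
    (hu : Continuous u) (hv : Continuous v) :
    Integrable fun z : Fin d → ℝ => (∏ j, K j (z j)) * (g (u z) - g (v z)) :=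
  (Integrable.fintype_prod hK).mul_bdd (c := L i + L i)
    (((hg.continuous hα).comp hu).sub ((hg.continuous hα).comp hv)).aestronglyMeasurable
    (.of_forall fun _ => (norm_sub_le _ _).trans (add_le_add (hg.abs_le i _) (hg.abs_le i _)))

end IsAnisotropicHolder

section Fubini

lemma integral_pi_eq_integral_integral_insertNth {n : ℕ} {X : Fin (n + 1) → Type*}
    [∀ i, MeasurableSpace (X i)] (μ : ∀ i, Measure (X i)) [∀ i, SigmaFinite (μ i)]
    {E : Type*} [NormedAddCommGroup E] [NormedSpace ℝ E] (i : Fin (n + 1)) {f : (∀ j, X j) → E}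
    (hf : Integrable f (Measure.pi μ)) :
    ∫ z, f z ∂Measure.pi μ =
      ∫ z, ∫ y, f (i.insertNth y z) ∂μ i ∂Measure.pi fun j => μ (i.succAbove j) := by
  have hmp := (measurePreserving_piFinSuccAbove μ i).symm
  rw [← hmp.integral_comp (MeasurableEquiv.measurableEmbedding _) f]
  exact integral_prod_symm (E := E) _
    ((hmp.integrable_comp_emb (MeasurableEquiv.measurableEmbedding _)).2 hf)

lemma abs_integral_prod_mul_le {d : ℕ} {X : Type*} [MeasurableSpace X] [Nonempty X]
    (μ : Fin d → Measure X) [∀ i, SigmaFinite (μ i)] {K : Fin d → X → ℝ}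
    (hK : ∀ i, Integrable (K i) (μ i)) {F : (Fin d → X) → ℝ}
    (hKF : Integrable (fun z => (∏ j, K j (z j)) * F z) (Measure.pi μ)) (i : Fin d) {c : ℝ}
    (hc : ∀ z, |∫ y, K i y * F (Function.update z i y) ∂μ i| ≤ c) :
    |∫ z, (∏ j, K j (z j)) * F z ∂Measure.pi μ| ≤
      (∏ j ∈ Finset.univ.erase i, ∫ y, |K j y| ∂μ j) * c := by
  obtain ⟨n, rfl⟩ : ∃ n, d = n + 1 := ⟨d - 1, by have := i.pos; omega⟩
  have hslice (z : Fin n → X) (y : X) :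
      (∏ j, K j (i.insertNth (α := fun _ => X) y z j)) * F (i.insertNth y z) =
        (∏ j, K (i.succAbove j) (z j)) * (K i y * F (i.insertNth y z)) := by
    rw [Fin.prod_univ_succAbove _ i]
    simp only [Fin.insertNth_apply_same, Fin.insertNth_apply_succAbove]
    ring
  have hprod : ∏ j ∈ Finset.univ.erase i, ∫ y, |K j y| ∂μ j =
      ∫ z : Fin n → X, ∏ j, |K (i.succAbove j) (z j)| ∂Measure.pi fun j => μ (i.succAbove j) := by
    rw [integral_fintype_prod_eq_prod fun j y => |K (i.succAbove j) y|, Fin.univ_succAbove n i,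
      Finset.erase_cons, Finset.prod_map]
    rfl
  rw [integral_pi_eq_integral_integral_insertNth μ i hKF, hprod, ← integral_mul_const,
    ← Real.norm_eq_abs]
  refine norm_integral_le_of_norm_le ((Integrable.fintype_prod
    fun j => (hK (i.succAbove j)).abs).mul_const c) (.of_forall fun z => ?_)
  simp only [hslice]
  rw [integral_const_mul, norm_mul, norm_prod]
  simp only [Real.norm_eq_abs]
  refine mul_le_mul_of_nonneg_left ?_ (Finset.prod_nonneg fun _ _ => abs_nonneg _)
  obtain ⟨y₀⟩ := ‹Nonempty X›
  simpa only [Fin.update_insertNth] using hc (i.insertNth y₀ z)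

end Fubini

section Bias

variable {d : ℕ} {α L : Fin d → ℝ} {K : Fin d → ℝ → ℝ} {g : (Fin d → ℝ) → ℝ}

/-- The coefficient of `|h i| ^ α i` in the bias bound of the product kernel `∏ j, K j`, coming from
the increment of the smoothed function along the `i`-th axis. -/
noncomputable def biasCoeff (α L : Fin d → ℝ) (K : Fin d → ℝ → ℝ) (i : Fin d) : ℝ :=
  (∏ j ∈ Finset.univ.erase i, ∫ y, |K j y|) * (L i * ∫ y, |y| ^ α i * |K i y|)

lemma abs_integral_mul_axisSlice_sub_le (hα : ∀ i, 0 < α i) (hg : IsAnisotropicHolder d α L g)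
    {i : Fin d} {k : ℝ → ℝ} (hk : IsKernelOfOrder (α i) k) (w : Fin d → ℝ) (h : ℝ) :
    |∫ y, k y * (axisSlice g w i (h * y) - g w)| ≤ L i * |h| ^ α i * ∫ y, |y| ^ α i * |k y| := by
  obtain ⟨n, hn⟩ : ∃ n, ⌈α i⌉₊ = n + 1 := Nat.exists_eq_succ_of_ne_zero (Nat.ceil_pos.2 (hα i)).ne'
  have hnα : (n : ℝ) < α i := Nat.lt_ceil.1 (by omega)
  have hαn : α i - n ≤ 1 := by
    have := Nat.le_ceil (α i)
    rw [hn] at this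
    push_cast at this
    linarith
  have hslice := hg.hasHolderIteratedDeriv_axisSlice hnα w
  rw [min_eq_right hαn] at hslice
  have hmeas : Measurable (axisSlice g w i) :=
    ((hg.continuous hα).comp (by fun_prop)).measurable
  have hα_eq : n + (α i - n) = α i := add_sub_cancel _ _
  simpa [hα_eq, axisSlice_apply] using
    IsKernelOfOrder.abs_integral_mul_sub_le (hα_eq.symm ▸ hk) (sub_pos.2 hnα) hslice hmeas h

lemma abs_integral_prod_mul_piecewise_insert_sub_le (hα : ∀ i, 0 < α i)
    (hK : ∀ i, IsKernelOfOrder (α i) (K i)) (hg : IsAnisotropicHolder d α L g)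
    (x h : Fin d → ℝ) {i : Fin d} {s : Finset (Fin d)} (hi : i ∉ s) :
    |∫ z : Fin d → ℝ, (∏ j, K j (z j)) *
        (g ((insert i s).piecewise (x - h * z) x) - g (s.piecewise (x - h * z) x))| ≤
      biasCoeff α L K i * |h i| ^ α i := by
  have hcont (t : Finset (Fin d)) : Continuous fun z : Fin d → ℝ => t.piecewise (x - h * z) x :=
    continuous_finsetPiecewise (by fun_prop) continuous_const t
  refine (abs_integral_prod_mul_le (fun _ => volume) (fun j => (hK j).integrable)
    (hg.integrable_prod_mul_sub hα i (fun j => (hK j).integrable) (hcont _) (hcont _)) i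
    fun z => ?_).trans_eq (by rw [biasCoeff, mul_assoc, mul_right_comm (L i)])
  set w := s.piecewise (x - h * z) x
  have hw (y : ℝ) : s.piecewise (x - h * Function.update z i y) x = w :=
    s.piecewise_congr (fun j hj => by simp [ne_of_mem_of_not_mem hj hi]) fun _ _ => rfl
  have hinsert (y : ℝ) : g ((insert i s).piecewise (x - h * Function.update z i y) x) =
      axisSlice g w i (-h i * y) := by
    rw [Finset.piecewise_insert, hw, axisSlice_apply]
    simp [w, hi, sub_eq_add_neg]
  simp only [hw, hinsert]
  simpa only [abs_neg] using abs_integral_mul_axisSlice_sub_le hα hg (hK i) w (-h i)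

lemma abs_integral_prod_mul_piecewise_sub_le (hα : ∀ i, 0 < α i)
    (hK : ∀ i, IsKernelOfOrder (α i) (K i)) (hg : IsAnisotropicHolder d α L g)
    (x h : Fin d → ℝ) (s : Finset (Fin d)) :
    |∫ z : Fin d → ℝ, (∏ j, K j (z j)) * (g (s.piecewise (x - h * z) x) - g x)| ≤
      ∑ i ∈ s, biasCoeff α L K i * |h i| ^ α i := by
  induction s using Finset.induction_on with
  | empty => simp
  | insert i s hi ih =>
    have hcont (t : Finset (Fin d)) : Continuous fun z : Fin d → ℝ => t.piecewise (x - h * z) x :=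
      continuous_finsetPiecewise (by fun_prop) continuous_const t
    have hint {u v : (Fin d → ℝ) → Fin d → ℝ} (hu : Continuous u) (hv : Continuous v) :=
      hg.integrable_prod_mul_sub hα i (fun j => (hK j).integrable) hu hv
    have hsplit := integral_add (hint (hcont (insert i s)) (hcont s))
      (hint (hcont s) (continuous_const (y := x)))
    simp only [← mul_add, sub_add_sub_cancel] at hsplit
    rw [hsplit, Finset.sum_insert hi]
    exact (abs_add_le _ _).trans
      (add_le_add (abs_integral_prod_mul_piecewise_insert_sub_le hα hK hg x h hi) ih)

end Bias

theorem stmt_11_general {d : ℕ} {α : Fin d → ℝ} (hα : ∀ i, 0 < α i) (L : Fin d → ℝ)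
    {K : Fin d → ℝ → ℝ} (hK : ∀ i, IsKernelOfOrder (α i) (K i)) :
    ∃ C > 0, ∀ g : (Fin d → ℝ) → ℝ, IsAnisotropicHolder d α L g → ∀ x h : Fin d → ℝ,
      |∫ z : Fin d → ℝ, (∏ i, K i (z i)) * (g (fun i => x i - h i * z i) - g x)| ≤
        C * ∑ i, |h i| ^ α i := by
  refine ⟨1 + ∑ i, |biasCoeff α L K i|, by positivity, fun g hg x h => ?_⟩
  have hbias := abs_integral_prod_mul_piecewise_sub_le hα hK hg x h Finset.univ
  simp only [Finset.piecewise_univ] at hbias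
  refine hbias.trans ?_
  rw [Finset.mul_sum]
  gcongr with i
  have hle_sum := Finset.single_le_sum (f := fun i => |biasCoeff α L K i|)
    (fun _ _ => abs_nonneg _) (Finset.mem_univ i)
  linarith [le_abs_self (biasCoeff α L K i)]

/-- anisotropic kernel bias bound.  For a kernel `K` of order `l`
(with `l ≥ ⌈α_i⌉` for all `i`) and `g` in the anisotropic Hölder class `H_d(α, L)`,
the kernel-smoothing bias is bounded by `C ∑ h_i^{α_i}` with `C` depending only on
`d, α, L, K`. -/
theorem stmt_11 (d l : ℕ) (hd : 1 ≤ d) (α L : Fin d → ℝ)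
    (hα : ∀ i, 0 < α i) (hL : ∀ i, 0 < L i)
    (K : ℝ → ℝ) (hKmeas : Measurable K) (hKbdd : ∃ B : ℝ, ∀ y : ℝ, |K y| ≤ B)
    (hKsupp : HasCompactSupport K)
    (hKint : (∫ y : ℝ, K y) = 1)
    (hKmom : ∀ k : ℕ, 1 ≤ k → k ≤ l - 1 → (∫ y : ℝ, y ^ k * K y) = 0)
    (hl : ∀ i, ⌈α i⌉₊ ≤ l) :
    ∃ C > 0, ∀ g : (Fin d → ℝ) → ℝ, IsAnisotropicHolder d α L g →
      ∀ (x h : Fin d → ℝ), (∀ i, 0 < h i) →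
        |∫ z : Fin d → ℝ, (∏ i : Fin d, K (z i)) *
            (g (fun i => x i - h i * z i) - g x)| ≤
          C * ∑ i : Fin d, h i ^ α i := by
  obtain ⟨B, hB⟩ := hKbdd
  have hK : Integrable K := memLp_one_iff_integrable.1 <|
    hKsupp.memLp_of_bound hKmeas.aestronglyMeasurable B (.of_forall hB)
  have hmom (i : Fin d) (k : ℕ) (hk : 1 ≤ k) (hkα : (k : ℝ) < α i) : ∫ y, y ^ k * K y = 0 :=
    hKmom k hk (Nat.le_sub_one_of_lt ((Nat.lt_ceil.2 hkα).trans_le (hl i)))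
  obtain ⟨C, hC, hbias⟩ := stmt_11_general hα L fun i =>
    IsKernelOfOrder.of_hasCompactSupport (hα i).le hK hKsupp (hmom i)
  exact ⟨C, hC, fun g hg x h hh => by simpa only [abs_of_pos (hh _)] using hbias g hg x h⟩
end
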